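/- Let {q_n : n≥0} be a sequence of non-negative reals with q_0>0, and let n∈ℕ, 1 ≤ s < m_n and sM_n < r ≤ (s+1)M_n. Then the Nörlund kernel satisfies the identity Q_r F_r = Q_r D_{sM_n} − ψ_{sM_n−1} · Σ_{l=1}^{sM_n−2} (q_{r−sM_n+l} − q_{r−sM_n+l+1}) · l · conj(K_l) − ψ_{sM_n−1} · (sM_n−1) · q_{r−1} · conj(K_{sM_n−1}) + ψ_{sM_n} · Q_{r−sM_n} F_{r−sM_n}, pointwise on G_m (here conj denotes complex conjugation). -/

import Mathlib

open MeasureTheory Filter Finset Asymptotics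
open scoped ENNReal NNReal

noncomputable section

namespace Vilenkin

/-- The Vilenkin group `G_m`: the complete direct product of the cyclic groups `Z_{m_n}`. -/
abbrev G (m : ℕ → ℕ) := ∀ n, ZMod (m n)

/-- The generalized number system `M_0 = 1`, `M_{n+1} = m_n M_n`. -/
def MM (m : ℕ → ℕ) : ℕ → ℕ
  | 0 => 1
  | n + 1 => m n * MM m n

/-- The generalized Rademacher functions `r_k(x) = exp(2 π i x_k / m_k)`. -/
def rade (m : ℕ → ℕ) (k : ℕ) (x : G m) : ℂ :=
  Complex.exp (2 * Real.pi * Complex.I * ((x k).val : ℂ) / (m k : ℂ))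

/-- The Vilenkin system `ψ_n = ∏_k r_k^{n_k}`, where `n = ∑_k n_k M_k` is the expansion of `n`
in the generalized number system (the digits `n_k = (n / M_k) mod m_k` vanish for `k > n`). -/
def psi (m : ℕ → ℕ) (n : ℕ) (x : G m) : ℂ :=
  ∏ k ∈ Finset.range (n + 1), rade m k x ^ (n / MM m k % m k)

/-- The Dirichlet kernels `D_n = ∑_{k=0}^{n-1} ψ_k`. -/
def D (m : ℕ → ℕ) (n : ℕ) (x : G m) : ℂ := ∑ k ∈ Finset.range n, psi m k x

/-- The Fejér kernels `K_n = (1/n) ∑_{k=1}^{n} D_k`. -/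
def K (m : ℕ → ℕ) (n : ℕ) (x : G m) : ℂ := (n : ℂ)⁻¹ * ∑ k ∈ Finset.Icc 1 n, D m k x

/-- `Q_n = ∑_{k=0}^{n-1} q_k`. -/
def Q (q : ℕ → ℝ) (n : ℕ) : ℝ := ∑ k ∈ Finset.range n, q k

/-- The Nörlund kernels `F_n = (1/Q_n) ∑_{k=1}^{n} q_{n-k} D_k`. -/
def F (m : ℕ → ℕ) (q : ℕ → ℝ) (n : ℕ) (x : G m) : ℂ :=
  ((Q q n : ℝ) : ℂ)⁻¹ * ∑ k ∈ Finset.Icc 1 n, (q (n - k) : ℂ) * D m k x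

/-- The interval (cylinder) `I_n(x) = {y : y_j = x_j for all j < n}`. -/
def cyl (m : ℕ → ℕ) (n : ℕ) (x : G m) : Set (G m) := {y | ∀ j < n, y j = x j}

/-- The element `s_k e_k` of `G_m` (value `s_k` in coordinate `k`, zero elsewhere). -/
def oneSpike (m : ℕ → ℕ) (k sk : ℕ) : G m := fun j => if j = k then (sk : ZMod (m j)) else 0

/-- The element `s_k e_k + s_l e_l` of `G_m` (for `k ≠ l`). -/
def twoSpike (m : ℕ → ℕ) (k sk l sl : ℕ) : G m :=
  fun j => if j = k then (sk : ZMod (m j)) else if j = l then (sl : ZMod (m j)) else 0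

/-- The σ-algebra `𝔉_n` generated by the intervals `I_n(x)`, i.e. by the first `n`
coordinates. -/
def filt (m : ℕ → ℕ) (n : ℕ) : MeasurableSpace (G m) :=
  MeasurableSpace.comap (fun x (i : Fin n) => x i.val) inferInstance

/-- `f = (f^{(n)})` is a martingale with respect to the filtration `(𝔉_n)` and the measure `μ`. -/
def IsMartingale (m : ℕ → ℕ) (μ : Measure (G m)) (f : ℕ → G m → ℂ) : Prop :=
  (∀ n, Integrable (f n) μ) ∧ (∀ n, Measurable[filt m n] (f n)) ∧
    ∀ n, ∀ s : Set (G m), MeasurableSet[filt m n] s →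
      ∫ x in s, f (n + 1) x ∂μ = ∫ x in s, f n x ∂μ

/-- The `L_p`-quasinorm `(∫ g^p dμ)^{1/p}` of a nonnegative (extended-real-valued) function. -/
def lpNormE (m : ℕ → ℕ) (μ : Measure (G m)) (p : ℝ) (g : G m → ℝ≥0∞) : ℝ≥0∞ :=
  (∫⁻ x, g x ^ p ∂μ) ^ (1 / p)

/-- The martingale Hardy space quasinorm `‖f‖_{H_p} = ‖sup_n |f^{(n)}|‖_p`. -/
def HpNorm (m : ℕ → ℕ) (μ : Measure (G m)) (p : ℝ) (f : ℕ → G m → ℂ) : ℝ≥0∞ :=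
  lpNormE m μ p (fun x => ⨆ n, (‖f n x‖₊ : ℝ≥0∞))

/-- The Vilenkin-Fourier coefficients of a martingale:
`f̂(i) = lim_k ∫ f^{(k)} conj ψ_i dμ`. -/
def mcoef (m : ℕ → ℕ) (μ : Measure (G m)) (f : ℕ → G m → ℂ) (i : ℕ) : ℂ :=
  limUnder atTop fun k => ∫ x, f k x * (starRingEnd ℂ) (psi m i x) ∂μ

/-- The partial sums `S_n f = ∑_{k=0}^{n-1} f̂(k) ψ_k` of the Vilenkin-Fourier series of a
martingale. -/
def mS (m : ℕ → ℕ) (μ : Measure (G m)) (f : ℕ → G m → ℂ) (n : ℕ) (x : G m) : ℂ :=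
  ∑ k ∈ Finset.range n, mcoef m μ f k * psi m k x

/-- The Nörlund means `t_n f = (1/Q_n) ∑_{k=1}^{n} q_{n-k} S_k f` of a martingale. -/
def mT (m : ℕ → ℕ) (q : ℕ → ℝ) (μ : Measure (G m)) (f : ℕ → G m → ℂ) (n : ℕ) (x : G m) : ℂ :=
  ((Q q n : ℝ) : ℂ)⁻¹ * ∑ k ∈ Finset.Icc 1 n, (q (n - k) : ℂ) * mS m μ f k x

/-- The Cesàro numbers `A_0^α = 0`, `A_n^α = (α+1)⋯(α+n)/n!`. -/
def AC (α : ℝ) (n : ℕ) : ℝ :=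
  if n = 0 then 0 else (∏ j ∈ Finset.Icc 1 n, (α + (j : ℝ))) / (n.factorial : ℝ)

/-- The `(C,α)` (Cesàro) means `σ_n^α f = (1/A_n^α) ∑_{k=1}^{n} A_{n-k}^{α-1} S_k f` of a
martingale. -/
def mCes (m : ℕ → ℕ) (α : ℝ) (μ : Measure (G m)) (f : ℕ → G m → ℂ) (n : ℕ) (x : G m) : ℂ :=
  ((AC α n : ℝ) : ℂ)⁻¹ * ∑ k ∈ Finset.Icc 1 n, ((AC (α - 1) (n - k) : ℝ) : ℂ) * mS m μ f k x

/-- The Fejér means `σ_n f = (1/n) ∑_{k=1}^{n} S_k f` of a martingale. -/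
def mFej (m : ℕ → ℕ) (μ : Measure (G m)) (f : ℕ → G m → ℂ) (n : ℕ) (x : G m) : ℂ :=
  (n : ℂ)⁻¹ * ∑ k ∈ Finset.Icc 1 n, mS m μ f k x

/-- The Vilenkin-Fourier coefficients of an integrable function. -/
def fcoef (m : ℕ → ℕ) (μ : Measure (G m)) (g : G m → ℂ) (i : ℕ) : ℂ :=
  ∫ x, g x * (starRingEnd ℂ) (psi m i x) ∂μ

/-- The partial sums of the Vilenkin-Fourier series of an integrable function. -/
def fS (m : ℕ → ℕ) (μ : Measure (G m)) (g : G m → ℂ) (n : ℕ) (x : G m) : ℂ :=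
  ∑ k ∈ Finset.range n, fcoef m μ g k * psi m k x

/-- The Nörlund means of an integrable function. -/
def fT (m : ℕ → ℕ) (q : ℕ → ℝ) (μ : Measure (G m)) (g : G m → ℂ) (n : ℕ) (x : G m) : ℂ :=
  ((Q q n : ℝ) : ℂ)⁻¹ * ∑ k ∈ Finset.Icc 1 n, (q (n - k) : ℂ) * fS m μ g k x


/-!
The character `ψ_{sM_n + b}` with `s < m_n`, `b < M_n` factors as `r_n^s ψ_b`. This gives two
symmetries of the Dirichlet kernels: the translation `D_{sM_n + j} = D_{sM_n} + ψ_{sM_n} D_j`,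
and, because nothing is carried when numbers with sum `sM_n - 1` are added, the reflection
`D_{sM_n - j} = D_{sM_n} - ψ_{sM_n - 1} conj D_j`. In `Q_r F_r = ∑_{k < r} q_k D_{r - k}` the
translation applies to the terms with `k < r - sM_n` and the reflection to the remaining ones;
summation by parts then turns the reflected Dirichlet kernels into Fejér kernels.
-/

variable {m : ℕ → ℕ} {n s : ℕ}

theorem lt_MM (hm : ∀ n, 2 ≤ m n) (k : ℕ) : k < MM m k := by
  induction k with
  | zero => exact Nat.one_pos
  | succ k ih => calc
      k + 1 < 2 * (k + 1) := by omega
      _ ≤ m k * MM m k := Nat.mul_le_mul (hm k) ih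

theorem MM_pos (hm : ∀ n, 2 ≤ m n) (k : ℕ) : 0 < MM m k :=
  (Nat.zero_le k).trans_lt (lt_MM hm k)

theorem MM_dvd_MM {k l : ℕ} (h : k ≤ l) : MM m k ∣ MM m l := by
  induction l, h using Nat.le_induction with
  | base => exact dvd_rfl
  | succ l _ ih => exact ih.mul_left (m l)

theorem psi_eq_prod_range (hm : ∀ n, 2 ≤ m n) {a T : ℕ} (ha : a < MM m T) (x : G m) :
    psi m a x = ∏ k ∈ range T, rade m k x ^ (a / MM m k % m k) := by
  have factor_eq_one {N : ℕ} (hN : a < MM m N) (k : ℕ) (hk : N ≤ k) :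
      rade m k x ^ (a / MM m k % m k) = 1 := by
    have hle : MM m N ≤ MM m k := Nat.le_of_dvd (MM_pos hm k) (MM_dvd_MM hk)
    rw [Nat.div_eq_of_lt (hN.trans_le hle), Nat.zero_mod, pow_zero]
  have ha' : a < MM m (a + 1) := (Nat.lt_succ_self a).trans (lt_MM hm (a + 1))
  rcases le_total T (a + 1) with h | h
  · exact eventually_constant_prod (factor_eq_one ha) h
  · exact (eventually_constant_prod (factor_eq_one ha') h).symm

theorem psi_mul_MM_add (hm : ∀ n, 2 ≤ m n) (hs : s < m n) {b : ℕ} (hb : b < MM m n) (x : G m) :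
    psi m (s * MM m n + b) x = rade m n x ^ s * psi m b x := by
  have hlt : s * MM m n + b < MM m (n + 1) := calc
    s * MM m n + b < (s + 1) * MM m n := by rw [add_one_mul]; gcongr
    _ ≤ m n * MM m n := Nat.mul_le_mul_right _ hs
  rw [psi_eq_prod_range hm hlt, psi_eq_prod_range hm hb, prod_range_succ, mul_comm]
  congr 1
  · rw [add_comm, Nat.add_mul_div_right _ _ (MM_pos hm n), Nat.div_eq_of_lt hb, zero_add,
      Nat.mod_eq_of_lt hs]
  · refine prod_congr rfl fun k hk => ?_
    have hdvd : MM m k * m k ∣ s * MM m n := by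
      rw [mul_comm]
      exact (MM_dvd_MM (m := m) (Nat.succ_le_of_lt (mem_range.1 hk))).mul_left s
    rw [← Nat.mod_mul_right_div_self, Nat.add_mod, Nat.mod_eq_zero_of_dvd hdvd, zero_add,
      Nat.mod_mod, Nat.mod_mul_right_div_self]

theorem psi_zero (x : G m) : psi m 0 x = 1 := by
  simp [psi]

theorem psi_mul_MM (hm : ∀ n, 2 ≤ m n) (hs : s < m n) (x : G m) :
    psi m (s * MM m n) x = rade m n x ^ s := by
  simpa [psi_zero] using psi_mul_MM_add hm hs (MM_pos hm n) x

theorem mod_add_mod_add_one_eq {i j M : ℕ} (h : i + j + 1 = s * M) : i % M + j % M + 1 = M := by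
  have hM : 0 < M := Nat.pos_of_ne_zero (by rintro rfl; simp at h)
  have hi : i % M < M := Nat.mod_lt i hM
  have hj : j % M < M := Nat.mod_lt j hM
  have hdvd : M ∣ i % M + j % M + 1 := by
    have hmod : i % M + j % M + 1 ≡ i + j + 1 [MOD M] :=
      ((Nat.mod_modEq i M).add (Nat.mod_modEq j M)).add_right 1
    exact (hmod.dvd_iff dvd_rfl).2 (h ▸ dvd_mul_left M s)
  exact Nat.eq_of_dvd_of_lt_two_mul (Nat.succ_ne_zero _) hdvd (by omega)

theorem div_add_div_add_one_eq {i j M : ℕ} (h : i + j + 1 = s * M) : i / M + j / M + 1 = s := by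
  have hM : 0 < M := Nat.pos_of_ne_zero (by rintro rfl; simp at h)
  have hmod := mod_add_mod_add_one_eq h
  refine Nat.eq_of_mul_eq_mul_right hM ?_
  linarith [Nat.div_add_mod' i M, Nat.div_add_mod' j M]

theorem psi_mul_psi_of_add_add_one_eq_mul_MM (hm : ∀ n, 2 ≤ m n) {n s i j : ℕ} (hs : s ≤ m n)
    (h : i + j + 1 = s * MM m n) (x : G m) : psi m i x * psi m j x = psi m (i + j) x := by
  have hmod := mod_add_mod_add_one_eq h
  have hdiv := div_add_div_add_one_eq h
  -- The low parts add up to `M_n - 1 = m_{n-1} M_{n-1} - 1`, the case `s = m_{n-1}` one level down.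
  have hlow : psi m (i % MM m n) x * psi m (j % MM m n) x =
      psi m (i % MM m n + j % MM m n) x := by
    cases n with
    | zero => simp [MM, Nat.mod_one, psi_zero]
    | succ n => exact psi_mul_psi_of_add_add_one_eq_mul_MM hm le_rfl hmod x
  have hfactor (k : ℕ) (hk : k / MM m n < m n) :
      psi m k x = rade m n x ^ (k / MM m n) * psi m (k % MM m n) x := by
    rw [← psi_mul_MM_add hm hk (Nat.mod_lt k (MM_pos hm n)), Nat.div_add_mod']
  have hsum : i + j = (i / MM m n + j / MM m n) * MM m n + (i % MM m n + j % MM m n) := by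
    linarith [Nat.div_add_mod' i (MM m n), Nat.div_add_mod' j (MM m n)]
  have hdigits : i / MM m n + j / MM m n < m n := by omega
  rw [hfactor i ((Nat.le_add_right _ _).trans_lt hdigits),
    hfactor j ((Nat.le_add_left _ _).trans_lt hdigits), hsum,
    psi_mul_MM_add hm hdigits (by omega), ← hlow, pow_add]
  ring

theorem norm_rade (k : ℕ) (x : G m) : ‖rade m k x‖ = 1 := by
  rw [rade, Complex.norm_exp]
  simp

theorem norm_psi (k : ℕ) (x : G m) : ‖psi m k x‖ = 1 := by
  simp [psi, norm_prod, norm_rade]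

theorem psi_mul_conj_psi (k : ℕ) (x : G m) : psi m k x * (starRingEnd ℂ) (psi m k x) = 1 := by
  simp [Complex.mul_conj', norm_psi]

theorem psi_mul_MM_sub_one_sub (hm : ∀ n, 2 ≤ m n) (hs : s ≤ m n) {i : ℕ} (hi : i < s * MM m n)
    (x : G m) :
    psi m (s * MM m n - 1 - i) x =
      psi m (s * MM m n - 1) x * (starRingEnd ℂ) (psi m i x) := by
  have hmul := psi_mul_psi_of_add_add_one_eq_mul_MM hm hs
    (show (s * MM m n - 1 - i) + i + 1 = s * MM m n by omega) x
  rw [Nat.sub_add_cancel (by omega)] at hmul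
  rw [← hmul, mul_assoc, psi_mul_conj_psi, mul_one]

theorem D_mul_MM_add (hm : ∀ n, 2 ≤ m n) (hs : s < m n) {j : ℕ} (hj : j ≤ MM m n) (x : G m) :
    D m (s * MM m n + j) x = D m (s * MM m n) x + psi m (s * MM m n) x * D m j x := by
  rw [D, sum_range_add, D, D, mul_sum, psi_mul_MM hm hs]
  congr 1
  exact sum_congr rfl fun k hk => psi_mul_MM_add hm hs ((mem_range.1 hk).trans_le hj) x

theorem D_mul_MM_sub (hm : ∀ n, 2 ≤ m n) (hs : s ≤ m n) {j : ℕ} (hj : j ≤ s * MM m n)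
    (x : G m) :
    D m (s * MM m n - j) x =
      D m (s * MM m n) x - psi m (s * MM m n - 1) x * (starRingEnd ℂ) (D m j x) := by
  have hsplit : D m (s * MM m n) x =
      D m (s * MM m n - j) x + ∑ i ∈ range j, psi m (s * MM m n - j + i) x := by
    simp only [D]
    rw [← sum_range_add, Nat.sub_add_cancel hj]
  have hreflect : ∑ i ∈ range j, psi m (s * MM m n - j + i) x =
      psi m (s * MM m n - 1) x * (starRingEnd ℂ) (D m j x) := by
    rw [D, map_sum, mul_sum, ← sum_range_reflect]
    refine sum_congr rfl fun i hi => ?_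
    have hij : i < j := mem_range.1 hi
    rw [← psi_mul_MM_sub_one_sub hm hs (hij.trans_le hj),
      show s * MM m n - j + (j - 1 - i) = s * MM m n - 1 - i by omega]
  rw [hsplit, hreflect, add_sub_cancel_right]

theorem sum_range_eq_sum_Icc_one {M : Type*} [AddCommMonoid M] {f : ℕ → M} (hf : f 0 = 0)
    (N : ℕ) : ∑ k ∈ range N, f k = ∑ k ∈ Icc 1 (N - 1), f k := by
  refine (sum_subset (fun k hk => ?_) fun k hk hk' => ?_).symm
  · simp only [mem_Icc, mem_range] at hk ⊢
    omega
  · simp only [mem_Icc, mem_range] at hk hk'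
    rw [show k = 0 by omega, hf]

theorem sum_range_succ_D (l : ℕ) (x : G m) :
    ∑ k ∈ range (l + 1), D m k x = (l : ℂ) * K m l x := by
  rcases eq_or_ne l 0 with rfl | hl
  · simp [D]
  · rw [K, mul_inv_cancel_left₀ (Nat.cast_ne_zero.2 hl), sum_range_eq_sum_Icc_one (by simp [D]),
      Nat.add_sub_cancel]

theorem sum_range_succ_mul_conj_D (a : ℕ → ℂ) (N : ℕ) (x : G m) :
    ∑ k ∈ range (N + 1), a k * (starRingEnd ℂ) (D m k x) =
      ∑ l ∈ Icc 1 (N - 1), (a l - a (l + 1)) * l * (starRingEnd ℂ) (K m l x) +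
        N * a N * (starRingEnd ℂ) (K m N x) := by
  have hpartial (l : ℕ) :
      ∑ k ∈ range (l + 1), (starRingEnd ℂ) (D m k x) = l * (starRingEnd ℂ) (K m l x) := by
    rw [← map_sum, sum_range_succ_D, map_mul, map_natCast]
  have hparts := sum_range_by_parts a (fun k => (starRingEnd ℂ) (D m k x)) (N + 1)
  simp only [smul_eq_mul, Nat.add_sub_cancel, hpartial] at hparts
  rw [hparts, ← sum_range_eq_sum_Icc_one (by simp), sub_eq_neg_add, ← sum_neg_distrib]
  congr 1
  · exact sum_congr rfl fun l _ => by ring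
  · ring

/-- The unnormalized Nörlund kernel `∑_{k=0}^{n-1} a_k D_{n-k}`, which is `Q_n F_n` when `a = q`.
The weights are complex because no positivity or normalization is involved. -/
def norlundSum (m : ℕ → ℕ) (a : ℕ → ℂ) (n : ℕ) (x : G m) : ℂ :=
  ∑ k ∈ range n, a k * D m (n - k) x

theorem Q_mul_F {q : ℕ → ℝ} {r : ℕ} (hQ : r ≠ 0 → Q q r ≠ 0) (x : G m) :
    (Q q r : ℂ) * F m q r x = norlundSum m (fun k => (q k : ℂ)) r x := by
  rcases eq_or_ne r 0 with rfl | hr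
  · simp [Q, norlundSum]
  · rw [F, mul_inv_cancel_left₀ (Complex.ofReal_ne_zero.2 (hQ hr)), norlundSum, range_eq_Ico]
    have hreflect := sum_Ico_reflect (fun k => (q (r - k) : ℂ) * D m k x) 0 r.le_succ
    rw [Nat.add_sub_cancel_left, Nat.sub_zero, Ico_add_one_right_eq_Icc] at hreflect
    rw [← hreflect]
    refine sum_congr rfl fun k hk => ?_
    rw [Nat.sub_sub_self (mem_Ico.1 hk).2.le]

theorem norlundSum_add_mul_MM (hm : ∀ n, 2 ≤ m n) (hs : s < m n) {t : ℕ} (ht : t ≤ MM m n)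
    (a : ℕ → ℂ) (x : G m) :
    norlundSum m a (t + s * MM m n) x =
      (∑ k ∈ range t, a k) * D m (s * MM m n) x + psi m (s * MM m n) x * norlundSum m a t x +
        norlundSum m (fun j => a (t + j)) (s * MM m n) x := by
  rw [norlundSum, sum_range_add]
  congr 1
  · rw [norlundSum, sum_mul, mul_sum, ← sum_add_distrib]
    refine sum_congr rfl fun k hk => ?_
    have hkt : k < t := mem_range.1 hk
    rw [show t + s * MM m n - k = s * MM m n + (t - k) by omega,
      D_mul_MM_add hm hs ((Nat.sub_le t k).trans ht)]
    ring
  · simp only [norlundSum, Nat.add_sub_add_left]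

theorem norlundSum_mul_MM (hm : ∀ n, 2 ≤ m n) (hs : s ≤ m n) (a : ℕ → ℂ) (x : G m) :
    norlundSum m a (s * MM m n) x =
      (∑ k ∈ range (s * MM m n), a k) * D m (s * MM m n) x -
        psi m (s * MM m n - 1) x *
          ∑ k ∈ range (s * MM m n), a k * (starRingEnd ℂ) (D m k x) := by
  rw [norlundSum, sum_mul, mul_sum, ← sum_sub_distrib]
  refine sum_congr rfl fun k hk => ?_
  rw [D_mul_MM_sub hm hs (mem_range.1 hk).le]
  ring

theorem norlundSum_add_mul_MM_eq_fejer (hm : ∀ n, 2 ≤ m n) (hs1 : 1 ≤ s) (hs2 : s < m n) {t : ℕ}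
    (ht : t ≤ MM m n) (a : ℕ → ℂ) (x : G m) :
    norlundSum m a (t + s * MM m n) x =
      (∑ k ∈ range (t + s * MM m n), a k) * D m (s * MM m n) x
        - psi m (s * MM m n - 1) x *
            ∑ l ∈ Icc 1 (s * MM m n - 2),
              (a (t + l) - a (t + l + 1)) * l * (starRingEnd ℂ) (K m l x)
        - psi m (s * MM m n - 1) x * (s * MM m n - 1 : ℕ) * a (t + (s * MM m n - 1)) *
            (starRingEnd ℂ) (K m (s * MM m n - 1) x)
        + psi m (s * MM m n) x * norlundSum m a t x := by
  have habel := sum_range_succ_mul_conj_D (fun j => a (t + j)) (s * MM m n - 1) x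
  rw [Nat.sub_add_cancel (Nat.mul_pos hs1 (MM_pos hm n)), Nat.sub_sub] at habel
  rw [norlundSum_add_mul_MM hm hs2 ht, norlundSum_mul_MM hm hs2.le, habel, sum_range_add]
  simp only [add_assoc]
  ring

theorem Q_pos {q : ℕ → ℝ} (hq0 : 0 < q 0) (hqnn : ∀ n, 0 ≤ q n) {r : ℕ} (hr : r ≠ 0) :
    0 < Q q r :=
  sum_pos' (fun i _ => hqnn i) ⟨0, mem_range.2 (Nat.pos_of_ne_zero hr), hq0⟩

theorem statement6_general (hm : ∀ n, 2 ≤ m n) {q : ℕ → ℝ} (hQ : ∀ k, k ≠ 0 → Q q k ≠ 0)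
    {r : ℕ} (hs1 : 1 ≤ s) (hs2 : s < m n)
    (hr1 : s * MM m n ≤ r) (hr2 : r ≤ (s + 1) * MM m n) (x : G m) :
    (Q q r : ℂ) * F m q r x =
      (Q q r : ℂ) * D m (s * MM m n) x
        - psi m (s * MM m n - 1) x *
            ∑ l ∈ Finset.Icc 1 (s * MM m n - 2),
              ((q (r - s * MM m n + l) - q (r - s * MM m n + l + 1) : ℝ) : ℂ) * (l : ℂ) *
                (starRingEnd ℂ) (K m l x)
        - psi m (s * MM m n - 1) x * ((s * MM m n - 1 : ℕ) : ℂ) * (q (r - 1) : ℂ) *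
            (starRingEnd ℂ) (K m (s * MM m n - 1) x)
        + psi m (s * MM m n) x * (Q q (r - s * MM m n) : ℂ) * F m q (r - s * MM m n) x := by
  obtain ⟨t, rfl⟩ := Nat.exists_eq_add_of_le' hr1
  have ht : t ≤ MM m n := by linarith
  have hN : 1 ≤ s * MM m n := Nat.mul_pos hs1 (MM_pos hm n)
  have hQsum : (Q q (t + s * MM m n) : ℂ) = ∑ k ∈ range (t + s * MM m n), (q k : ℂ) :=
    Complex.ofReal_sum _ _
  rw [Nat.add_sub_cancel, mul_assoc (psi m (s * MM m n) x), Q_mul_F (hQ _), Q_mul_F (hQ _), hQsum,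
    Nat.add_sub_assoc hN]
  simpa only [Complex.ofReal_sub] using
    norlundSum_add_mul_MM_eq_fejer hm hs1 hs2 ht (fun k => (q k : ℂ)) x

/-- Let `{q_n}` be non-negative reals with `q_0 > 0`, let `1 ≤ s < m_n` and
`s M_n < r ≤ (s+1) M_n`. Then the Nörlund kernel satisfies
`Q_r F_r = Q_r D_{sM_n} - ψ_{sM_n-1} ∑_{l=1}^{sM_n-2} (q_{r-sM_n+l} - q_{r-sM_n+l+1}) l conj(K_l)
 - ψ_{sM_n-1} (sM_n-1) q_{r-1} conj(K_{sM_n-1}) + ψ_{sM_n} Q_{r-sM_n} F_{r-sM_n}`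
pointwise on `G_m`. -/
theorem statement6
    (m : ℕ → ℕ) (hm : ∀ n, 2 ≤ m n) (hmb : ∃ B, ∀ n, m n ≤ B)
    (q : ℕ → ℝ) (hq0 : 0 < q 0) (hqnn : ∀ n, 0 ≤ q n)
    (n s r : ℕ) (hs1 : 1 ≤ s) (hs2 : s < m n)
    (hr1 : s * MM m n < r) (hr2 : r ≤ (s + 1) * MM m n) (x : G m) :
    (Q q r : ℂ) * F m q r x =
      (Q q r : ℂ) * D m (s * MM m n) x
        - psi m (s * MM m n - 1) x *
            ∑ l ∈ Finset.Icc 1 (s * MM m n - 2),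
              ((q (r - s * MM m n + l) - q (r - s * MM m n + l + 1) : ℝ) : ℂ) * (l : ℂ) *
                (starRingEnd ℂ) (K m l x)
        - psi m (s * MM m n - 1) x * ((s * MM m n - 1 : ℕ) : ℂ) * (q (r - 1) : ℂ) *
            (starRingEnd ℂ) (K m (s * MM m n - 1) x)
        + psi m (s * MM m n) x * (Q q (r - s * MM m n) : ℂ) * F m q (r - s * MM m n) x := by
  exact statement6_general hm (fun _ hk => (Q_pos hq0 hqnn hk).ne') hs1 hs2 hr1.le hr2 x

end Vilenkin
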